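/- Let c satisfy [H1] and [H2], let k ∈ ℂ with Im k ≥ 0, and let u₁ : ℝ → ℂ be the Jost solution from +∞ at k. Then for all x ∈ ℝ: |u₁(x) − e^{ikx}| ≤ |k| γ(x) e^{|k| γ(x) − x·Im k} and |u₁'(x) − i k u₁(x)| ≤ |k|² γ(x) (1 + |k| ‖q‖_{L¹} e^{|k| ‖q‖_{L¹}}) e^{−x·Im k}, where γ(x) = ∫ₓ^∞ |q(y)| dy and ‖q‖_{L¹} = ∫_ℝ |q(y)| dy (finite by [H2]). -/

import Mathlib

open MeasureTheory Filter Topology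

noncomputable section

/-- Hypothesis [H1]: `c` is essentially bounded below away from `0` and bounded above. -/
def HypH1 (c : ℝ → ℝ) : Prop :=
  ∃ c₀ > (0 : ℝ), ∃ cM > (0 : ℝ), ∀ᵐ x : ℝ, c₀ < c x ∧ c x ≤ cM

/-- Hypothesis [H1] with explicit constants `c₀`, `cM`. -/
def HypH1c (c : ℝ → ℝ) (c₀ cM : ℝ) : Prop :=
  0 < c₀ ∧ 0 < cM ∧ ∀ᵐ x : ℝ, c₀ < c x ∧ c x ≤ cM

/-- Hypothesis [H2]: `|c(x) - 1| ≤ C ⟨x⟩^{-1-δ}` almost everywhere. -/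
def HypH2 (c : ℝ → ℝ) : Prop :=
  ∃ C > (0 : ℝ), ∃ δ > (0 : ℝ),
    ∀ᵐ x : ℝ, |c x - 1| ≤ C * (1 + x ^ 2) ^ (-(1 + δ) / 2)

/-- `u` is continuously differentiable, its derivative is locally absolutely continuous,
and `u'' + (k²/c²) u = 0` holds almost everywhere (equivalently, the integral formulation
of the second-order equation holds). -/
def SolvesHelmholtz (c : ℝ → ℝ) (k : ℂ) (u : ℝ → ℂ) : Prop :=
  ContDiff ℝ 1 u ∧
  ∀ a b : ℝ, deriv u b = deriv u a + ∫ x in a..b, -(k ^ 2 / ((c x : ℂ) ^ 2)) * u x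

/-- The Jost solution from `+∞` at `k` : `e^{-ikx} u(x) → 1` as `x → +∞`. -/
def IsJostPlus (c : ℝ → ℝ) (k : ℂ) (u : ℝ → ℂ) : Prop :=
  SolvesHelmholtz c k u ∧
  Tendsto (fun x : ℝ => Complex.exp (-(Complex.I * k * (x : ℂ))) * u x) atTop (𝓝 1)

/-- The Jost solution from `-∞` at `k` : `e^{ikx} u(x) → 1` as `x → -∞`. -/
def IsJostMinus (c : ℝ → ℝ) (k : ℂ) (u : ℝ → ℂ) : Prop :=
  SolvesHelmholtz c k u ∧
  Tendsto (fun x : ℝ => Complex.exp (Complex.I * k * (x : ℂ)) * u x) atBot (𝓝 1)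

/-- `q = 1 - 1/c²`. -/
def qfun (c : ℝ → ℝ) (x : ℝ) : ℝ := 1 - 1 / (c x) ^ 2

/-- `Q = 1 - 1/c`. -/
def Qfun (c : ℝ → ℝ) (x : ℝ) : ℝ := 1 - 1 / c x

/-- `γ(x) = ∫ₓ^∞ |q(y)| dy`. -/
def jostGamma (c : ℝ → ℝ) (x : ℝ) : ℝ := ∫ y in Set.Ioi x, |qfun c y|

/-- `‖q‖_{L¹} = ∫_ℝ |q(y)| dy`. -/
def qL1 (c : ℝ → ℝ) : ℝ := ∫ y : ℝ, |qfun c y|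

/-!
Write `m(x) = e^{-ikx} u(x)`, so that `m'' + 2ik m' = k² q m`, and `D(t) = ∫₀ᵗ e^{2iks} ds`. Since
`D' - 2ik D = 1`, the functions `e^{2ik(y-x)} m'(y)` and `D(y-x) m'(y) - m(y)` of `y` have the
derivatives `k² e^{2ik(y-x)} q m` and `k² D(y-x) q m`. As `m` converges at `+∞`, comparing the
second function at `y = x` and `y = x + h` with `D(h) ≠ 0` shows that `m'` tends to zero, and
letting `y → +∞` yields
`m'(x) = -k² ∫ₓ^∞ e^{2ik(y-x)} q m` and `m(x) - 1 = k² ∫ₓ^∞ D(y-x) q m`.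
For `Im k ≥ 0` and `t ≥ 0` one has `|e^{2ikt}| ≤ 1` and `|k D(t)| ≤ 1`, so with
`G(x) = ∫ₓ^∞ |q m|` this gives `|m'| ≤ |k|² G` and `|m - 1| ≤ |k| G`, while Grönwall's inequality
from `+∞` bounds `1 + |k| G` by `e^{|k| γ}`.
-/

/-! ### Indefinite Lebesgue integrals -/

section IndefiniteIntegral

open Set

theorem absolutelyContinuousOnInterval_of_dist_le {X Y : Type*} [PseudoMetricSpace X]
    [PseudoMetricSpace Y] {f : ℝ → X} {g : ℝ → Y} {a b K : ℝ}
    (hg : AbsolutelyContinuousOnInterval g a b)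
    (h : ∀ x ∈ uIcc a b, ∀ y ∈ uIcc a b, dist (f x) (f y) ≤ K * dist (g x) (g y)) :
    AbsolutelyContinuousOnInterval f a b := by
  unfold AbsolutelyContinuousOnInterval at *
  have hK := Tendsto.const_mul K hg
  rw [mul_zero] at hK
  refine squeeze_zero' (.of_forall fun _ ↦ Finset.sum_nonneg fun _ _ ↦ dist_nonneg) ?_ hK
  rw [eventually_inf_principal]
  filter_upwards with I hI
  rw [Finset.mul_sum]
  exact Finset.sum_le_sum fun i hi ↦ h _ (hI.1 i hi).1 _ (hI.1 i hi).2

theorem intervalIntegrable_of_locallyIntegrable {E : Type*} [NormedAddCommGroup E] {f : ℝ → E}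
    (hf : LocallyIntegrable f) (a b : ℝ) : IntervalIntegrable f volume a b :=
  intervalIntegrable_iff.mpr <|
    (hf.integrableOn_isCompact isCompact_uIcc).mono_set uIoc_subset_uIcc

/-- `F` is an indefinite Lebesgue integral of the locally integrable function `f`; equivalently,
`F` is locally absolutely continuous with derivative `f` almost everywhere. This is the sense in
which `F' = f` for Carathéodory solutions of a differential equation. -/
structure IsIndefiniteIntegral {E : Type*} [NormedAddCommGroup E] [NormedSpace ℝ E]
    (F f : ℝ → E) : Prop where
  locallyIntegrable : LocallyIntegrable f
  integral_eq_sub : ∀ a b, ∫ x in a..b, f x = F b - F a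

namespace IsIndefiniteIntegral

variable {E : Type*} [NormedAddCommGroup E] [NormedSpace ℝ E] {F G f g : ℝ → E}

theorem congr (hF : IsIndefiniteIntegral F f) (hFG : ∀ x, F x = G x) (hfg : ∀ x, f x = g x) :
    IsIndefiniteIntegral G g :=
  funext hFG ▸ funext hfg ▸ hF

theorem intervalIntegrable (hF : IsIndefiniteIntegral F f) (a b : ℝ) :
    IntervalIntegrable f volume a b :=
  intervalIntegrable_of_locallyIntegrable hF.locallyIntegrable a b

theorem eq_add_integral (hF : IsIndefiniteIntegral F f) (a : ℝ) :
    F = fun x ↦ F a + ∫ t in a..x, f t := by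
  funext x
  rw [hF.integral_eq_sub, add_sub_cancel]

theorem continuous (hF : IsIndefiniteIntegral F f) : Continuous F := by
  rw [hF.eq_add_integral 0]
  exact continuous_const.add (intervalIntegral.continuous_primitive hF.intervalIntegrable 0)

theorem ae_hasDerivAt [CompleteSpace E] (hF : IsIndefiniteIntegral F f) :
    ∀ᵐ x, HasDerivAt F (f x) x := by
  filter_upwards [_root_.LocallyIntegrable.ae_hasDerivAt_integral hF.locallyIntegrable] with x hx
  rw [hF.eq_add_integral 0]
  exact (hx 0).const_add _

theorem absolutelyContinuousOnInterval (hF : IsIndefiniteIntegral F f) (a b : ℝ) :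
    AbsolutelyContinuousOnInterval F a b := by
  have hf := hF.intervalIntegrable
  refine absolutelyContinuousOnInterval_of_dist_le (K := 1)
    ((hf a b).norm.absolutelyContinuousOnInterval_intervalIntegral left_mem_uIcc) fun x _ y _ ↦ ?_
  rw [dist_eq_norm, dist_eq_norm, ← hF.integral_eq_sub y x, one_mul,
    intervalIntegral.integral_interval_sub_left (hf _ _).norm (hf _ _).norm]
  exact intervalIntegral.norm_integral_le_abs_integral_norm

theorem of_absolutelyContinuousOnInterval [CompleteSpace E]
    (hF : ∀ a b, AbsolutelyContinuousOnInterval F a b) (hf : LocallyIntegrable f)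
    (hFf : ∀ᵐ x, HasDerivAt F (f x) x) : IsIndefiniteIntegral F f := by
  refine ⟨hf, fun a b ↦ ?_⟩
  have hI : IsIndefiniteIntegral (fun x ↦ ∫ t in a..x, f t) f := by
    refine ⟨hf, fun x y ↦ ?_⟩
    have hint := intervalIntegrable_of_locallyIntegrable hf
    rw [intervalIntegral.integral_interval_sub_left (hint _ _) (hint _ _)]
  have hderiv : ∀ᵐ x, x ∈ uIcc a b → HasDerivAt (F - fun x ↦ ∫ t in a..x, f t) 0 x := by
    filter_upwards [hFf, hI.ae_hasDerivAt] with x h₁ h₂ _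
    simpa using h₁.sub h₂
  obtain ⟨C, hC⟩ := ((hF a b).sub
    (hI.absolutelyContinuousOnInterval a b)).const_of_ae_hasDerivAt_zero hderiv
  have h : F b - ∫ t in a..b, f t = F a - ∫ t in a..a, f t :=
    (hC b right_mem_uIcc).trans (hC a left_mem_uIcc).symm
  rw [intervalIntegral.integral_same, sub_zero] at h
  rw [← h, sub_sub_cancel]

theorem of_hasDerivAt [CompleteSpace E] (hF : ∀ x, HasDerivAt F (f x) x) (hf : Continuous f) :
    IsIndefiniteIntegral F f :=
  ⟨hf.locallyIntegrable, fun a b ↦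
    intervalIntegral.integral_eq_sub_of_hasDerivAt (fun x _ ↦ hF x) (hf.intervalIntegrable a b)⟩

theorem sub (hF : IsIndefiniteIntegral F f) (hG : IsIndefiniteIntegral G g) :
    IsIndefiniteIntegral (fun x ↦ F x - G x) (fun x ↦ f x - g x) := by
  refine ⟨hF.locallyIntegrable.sub hG.locallyIntegrable, fun a b ↦ ?_⟩
  rw [intervalIntegral.integral_sub (hF.intervalIntegrable a b) (hG.intervalIntegrable a b),
    hF.integral_eq_sub, hG.integral_eq_sub, sub_sub_sub_comm]

theorem mul {𝕜 : Type*} [NormedField 𝕜] [NormedAlgebra ℝ 𝕜] [CompleteSpace 𝕜]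
    [SecondCountableTopology 𝕜] {F G f g : ℝ → 𝕜}
    (hF : IsIndefiniteIntegral F f) (hG : IsIndefiniteIntegral G g) :
    IsIndefiniteIntegral (fun x ↦ F x * G x) (fun x ↦ f x * G x + F x * g x) := by
  refine of_absolutelyContinuousOnInterval (fun a b ↦ ?_) ?_ ?_
  · exact (hF.absolutelyContinuousOnInterval a b).smul (hG.absolutelyContinuousOnInterval a b)
  · exact (hF.locallyIntegrable.mul_continuous hG.continuous).add
      (hG.locallyIntegrable.continuous_mul hF.continuous)
  · filter_upwards [hF.ae_hasDerivAt, hG.ae_hasDerivAt] with x hFx hGx using hFx.mul hGx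

theorem comp_contDiff [CompleteSpace E] {P p : ℝ → ℝ} (hF : ContDiff ℝ 1 F)
    (hP : IsIndefiniteIntegral P p) :
    IsIndefiniteIntegral (fun x ↦ F (P x)) (fun x ↦ p x • deriv F (P x)) := by
  obtain ⟨hFd, hFc⟩ := contDiff_one_iff_deriv.1 hF
  refine of_absolutelyContinuousOnInterval (fun a b ↦ ?_) ?_ ?_
  · obtain ⟨c, d, hcd⟩ : ∃ c d, P '' uIcc a b ⊆ Icc c d :=
      ⟨_, _, (isCompact_uIcc.image hP.continuous).isBounded.subset_Icc_sInf_sSup⟩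
    obtain ⟨K, hK⟩ := (hF.contDiffOn (s := Icc c d)).exists_lipschitzOnWith one_ne_zero
      (convex_Icc c d) isCompact_Icc
    exact absolutelyContinuousOnInterval_of_dist_le (hP.absolutelyContinuousOnInterval a b)
      fun x hx y hy ↦ hK.dist_le_mul _ (hcd ⟨x, hx, rfl⟩) _ (hcd ⟨y, hy, rfl⟩)
  · exact hP.locallyIntegrable.smul_continuous (hFc.comp hP.continuous)
  · filter_upwards [hP.ae_hasDerivAt] with x hx
    exact (hFd (P x)).hasDerivAt.scomp x hx

theorem monotone {P p : ℝ → ℝ} (hP : IsIndefiniteIntegral P p) (hp : 0 ≤ᵐ[volume] p) :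
    Monotone P := fun a b hab ↦ by
  rw [← sub_nonneg, ← hP.integral_eq_sub]
  exact intervalIntegral.integral_nonneg_of_ae hab hp

theorem norm_sub_le {h : ℝ → ℝ} {a b : ℝ} (hF : IsIndefiniteIntegral F f) (hab : a ≤ b)
    (hh : IntegrableOn h (Ioi a)) (hfh : ∀ x, a < x → ‖f x‖ ≤ h x) :
    ‖F b - F a‖ ≤ ∫ x in Ioi a, h x := by
  rw [← hF.integral_eq_sub, intervalIntegral.integral_of_le hab]
  calc ‖∫ x in Ioc a b, f x‖ ≤ ∫ x in Ioc a b, h x :=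
        norm_integral_le_of_norm_le (hh.mono_set Ioc_subset_Ioi_self)
          (ae_restrict_of_forall_mem measurableSet_Ioc fun x hx ↦ hfh x hx.1)
    _ ≤ ∫ x in Ioi a, h x :=
        setIntegral_mono_set hh
          (ae_restrict_of_forall_mem measurableSet_Ioi fun x hx ↦ (norm_nonneg _).trans (hfh x hx))
          Ioc_subset_Ioi_self.eventuallyLE

theorem integral_Ioi (hf : ∀ a, IntegrableOn f (Ioi a)) :
    IsIndefiniteIntegral (fun x ↦ ∫ y in Ioi x, f y) (fun x ↦ -f x) := by
  refine ⟨fun x ↦ ?_, fun a b ↦ ?_⟩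
  · exact ⟨Ioi (x - 1), Ioi_mem_nhds (sub_one_lt x), (hf (x - 1)).neg⟩
  · rw [intervalIntegral.integral_neg, ← intervalIntegral.integral_Ioi_sub_Ioi' (hf a) (hf b),
      neg_sub]

end IsIndefiniteIntegral

end IndefiniteIntegral

/-! ### Grönwall's inequality from `+∞` -/

section Gronwall

open Set

theorem add_integral_Ioi_le_mul_exp {p f : ℝ → ℝ} {C : ℝ} (hp : ∀ x, 0 ≤ p x)
    (hpi : ∀ a, IntegrableOn p (Ioi a)) (hpf : ∀ a, IntegrableOn (fun y ↦ p y * f y) (Ioi a))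
    (h : ∀ x, f x ≤ C + ∫ y in Ioi x, p y * f y) (x : ℝ) :
    C + ∫ y in Ioi x, p y * f y ≤ C * Real.exp (∫ y in Ioi x, p y) := by
  set P : ℝ → ℝ := fun x ↦ ∫ y in Ioi x, p y
  set R : ℝ → ℝ := fun x ↦ C + ∫ y in Ioi x, p y * f y
  have hP : IsIndefiniteIntegral P fun x ↦ -p x := .integral_Ioi hpi
  have hR : IsIndefiniteIntegral R fun x ↦ -(p x * f x) :=
    ⟨(IsIndefiniteIntegral.integral_Ioi hpf).locallyIntegrable, fun a b ↦ by
      rw [(IsIndefiniteIntegral.integral_Ioi hpf).integral_eq_sub, add_sub_add_left_eq_sub]⟩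
  have hexp : ContDiff ℝ 1 fun t : ℝ ↦ Real.exp (-t) := by fun_prop
  have hderiv (t : ℝ) : deriv (fun t ↦ Real.exp (-t)) t = -Real.exp (-t) := by
    simpa using (hasDerivAt_neg t).exp.deriv
  have hmono : Monotone fun x ↦ R x * Real.exp (-P x) := by
    refine (hR.mul (.comp_contDiff hexp hP)).monotone (.of_forall fun y ↦ ?_)
    have : 0 ≤ p y * Real.exp (-P y) * (R y - f y) :=
      mul_nonneg (mul_nonneg (hp y) (Real.exp_pos _).le) (sub_nonneg.2 (h y))
    simp only [Pi.zero_apply, hderiv, smul_eq_mul]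
    linarith
  have hlim : Tendsto (fun x ↦ R x * Real.exp (-P x)) atTop (𝓝 C) := by
    have hR₀ : Tendsto R atTop (𝓝 (C + 0)) := (tendsto_integral_Ioi_zero tendsto_id).const_add C
    have hP₀ : Tendsto P atTop (𝓝 0) := tendsto_integral_Ioi_zero tendsto_id
    simpa using hR₀.mul hP₀.neg.rexp
  have hle := hmono.ge_of_tendsto hlim x
  rwa [Real.exp_neg, ← div_eq_mul_inv, div_le_iff₀ (Real.exp_pos _)] at hle

end Gronwall

/-! ### The Faddeev function of a solution of the Helmholtz equation -/

theorem norm_exp_I_mul (k : ℂ) (x : ℝ) :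
    ‖Complex.exp (Complex.I * k * x)‖ = Real.exp (-(x * k.im)) := by
  simp [Complex.norm_exp, mul_comm]

theorem hasDerivAt_exp_mul_ofReal (z : ℂ) (t : ℝ) :
    HasDerivAt (fun s : ℝ ↦ Complex.exp (z * s)) (z * Complex.exp (z * t)) t := by
  simpa [mul_comm] using ((hasDerivAt_id t).ofReal_comp.const_mul z).cexp

/-- The kernel `D(t) = ∫₀ᵗ e^{2iks} ds` of the Volterra equation for the Faddeev function. For
`k ≠ 0` it is `(e^{2ikt} - 1) / (2ik)`; the integral also covers `k = 0`. -/
def jostKernel (k : ℂ) (t : ℝ) : ℂ := ∫ s in (0 : ℝ)..t, Complex.exp (Complex.I * (2 * k) * s)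

section JostKernel

variable {k : ℂ}

theorem jostKernel_zero : jostKernel k 0 = 0 := intervalIntegral.integral_same

theorem hasDerivAt_jostKernel (t : ℝ) :
    HasDerivAt (jostKernel k) (Complex.exp (Complex.I * (2 * k) * t)) t := by
  have hcont : Continuous fun s : ℝ ↦ Complex.exp (Complex.I * (2 * k) * s) := by fun_prop
  exact (hcont.integral_hasStrictDerivAt 0 t).hasDerivAt

theorem mul_jostKernel (t : ℝ) :
    Complex.I * (2 * k) * jostKernel k t = Complex.exp (Complex.I * (2 * k) * t) - 1 := by
  have hcont : Continuous fun s : ℝ ↦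
      Complex.I * (2 * k) * Complex.exp (Complex.I * (2 * k) * s) := by fun_prop
  rw [jostKernel, ← intervalIntegral.integral_const_mul,
    intervalIntegral.integral_eq_sub_of_hasDerivAt
      (fun s _ ↦ hasDerivAt_exp_mul_ofReal (Complex.I * (2 * k)) s) (hcont.intervalIntegrable 0 t)]
  simp

theorem norm_exp_I_two_mul_le_one (hk : 0 ≤ k.im) {t : ℝ} (ht : 0 ≤ t) :
    ‖Complex.exp (Complex.I * (2 * k) * t)‖ ≤ 1 := by
  rw [norm_exp_I_mul, Real.exp_le_one_iff, neg_nonpos]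
  exact mul_nonneg ht (by simpa using hk)

theorem norm_mul_norm_jostKernel_le_one (hk : 0 ≤ k.im) {t : ℝ} (ht : 0 ≤ t) :
    ‖k‖ * ‖jostKernel k t‖ ≤ 1 := by
  have h : 2 * (‖k‖ * ‖jostKernel k t‖) ≤ 1 + 1 :=
    calc 2 * (‖k‖ * ‖jostKernel k t‖) = ‖Complex.I * (2 * k) * jostKernel k t‖ := by
          simp [mul_assoc]
      _ ≤ ‖Complex.exp (Complex.I * (2 * k) * t)‖ + ‖(1 : ℂ)‖ := by
          rw [mul_jostKernel]
          exact norm_sub_le _ _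
      _ ≤ 1 + 1 := by
          rw [norm_one]
          gcongr
          exact norm_exp_I_two_mul_le_one hk ht
  linarith

theorem exists_pos_jostKernel_ne_zero (k : ℂ) : ∃ h > 0, jostKernel k h ≠ 0 := by
  have hne : ∀ᶠ t in 𝓝[≠] (0 : ℝ), jostKernel k t ≠ 0 :=
    (hasDerivAt_jostKernel 0).eventually_ne (Complex.exp_ne_zero _)
  obtain ⟨h, hh, hpos⟩ :=
    ((hne.filter_mono (nhdsGT_le_nhdsNE 0)).and self_mem_nhdsWithin).exists
  exact ⟨h, hpos, hh⟩

end JostKernel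

/-- The Faddeev function `m(x) = e^{-ikx} u(x)`, which measures how far `u` is from the free wave
`e^{ikx}`. -/
def faddeev (k : ℂ) (u : ℝ → ℂ) (x : ℝ) : ℂ := Complex.exp (-(Complex.I * k * x)) * u x

/-- `u` is a Carathéodory solution of `u'' + k² (1 - q) u = 0`; for `q = 1 - 1/c²` this is the
Helmholtz equation with sound speed `c`. -/
structure IsHelmholtzSolution (q : ℝ → ℂ) (k : ℂ) (u : ℝ → ℂ) : Prop where
  contDiff : ContDiff ℝ 1 u
  isIndefiniteIntegral_deriv : IsIndefiniteIntegral (deriv u) fun x ↦ -(k ^ 2 * (1 - q x)) * u x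

/-- `u` is the Jost solution from `+∞` of `u'' + k² (1 - q) u = 0`, the one normalised by
`e^{-ikx} u(x) → 1`. -/
structure IsJostSolution (q : ℝ → ℂ) (k : ℂ) (u : ℝ → ℂ) : Prop
    extends IsHelmholtzSolution q k u where
  tendsto_faddeev : Tendsto (faddeev k u) atTop (𝓝 1)

/-- The tail `∫ₓ^∞ |q m|` of the forcing term in `m'' + 2ik m' = k² q m`, where `m` is the Faddeev
function. It controls both `m'` and `m - 1`. -/
def forcingTail (q : ℝ → ℂ) (k : ℂ) (u : ℝ → ℂ) (x : ℝ) : ℝ :=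
  ∫ y in Set.Ioi x, ‖q y‖ * ‖faddeev k u y‖

section Faddeev

open Set

variable {q u : ℝ → ℂ} {k : ℂ}

theorem integrableOn_Ioi_norm_mul_of_tendsto {𝕜 : Type*} [NormedField 𝕜] [SecondCountableTopology 𝕜]
    {q m : ℝ → 𝕜} {l : 𝕜}
    (hq : ∀ a, IntegrableOn q (Ioi a)) (hm : Continuous m) (hl : Tendsto m atTop (𝓝 l)) (a : ℝ) :
    IntegrableOn (fun y ↦ ‖q y‖ * ‖m y‖) (Ioi a) := by
  have hq' : IntegrableOn q (Ici a) := (hq (a - 1)).mono_set (Ici_subset_Ioi.2 (sub_one_lt a))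
  have hloc : LocallyIntegrableOn (fun y ↦ q y * m y) (Ici a) :=
    hq'.locallyIntegrableOn.mul_continuousOn hm.continuousOn isClosed_Ici.isLocallyClosed
  have hO : (fun y ↦ q y * m y) =O[atTop] q := by
    simpa using (Asymptotics.isBigO_refl q atTop).mul (hl.isBigO_one 𝕜)
  have hqm := hloc.integrableOn_of_isBigO_atTop hO ⟨Ici a, Ici_mem_atTop a, hq'⟩
  have hnorm := (hqm.mono_set Ioi_subset_Ici_self).norm
  simp only [norm_mul] at hnorm
  exact hnorm

theorem tendsto_forcingTail (q : ℝ → ℂ) (k : ℂ) (u : ℝ → ℂ) :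
    Tendsto (forcingTail q k u) atTop (𝓝 0) :=
  tendsto_integral_Ioi_zero tendsto_id

theorem exp_mul_faddeev (k : ℂ) (u : ℝ → ℂ) (x : ℝ) :
    Complex.exp (Complex.I * k * x) * faddeev k u x = u x := by
  rw [faddeev, ← mul_assoc, ← Complex.exp_add, add_neg_cancel, Complex.exp_zero, one_mul]

theorem hasDerivAt_faddeev {x : ℝ} (hu : DifferentiableAt ℝ u x) :
    HasDerivAt (faddeev k u)
      (Complex.exp (-(Complex.I * k * x)) * (deriv u x - Complex.I * k * u x)) x := by
  have hexp := hasDerivAt_exp_mul_ofReal (-(Complex.I * k)) x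
  simp only [neg_mul] at hexp
  exact (hexp.mul hu.hasDerivAt).congr_deriv (by ring)

theorem deriv_faddeev {x : ℝ} (hu : DifferentiableAt ℝ u x) :
    deriv (faddeev k u) x =
      Complex.exp (-(Complex.I * k * x)) * (deriv u x - Complex.I * k * u x) :=
  (hasDerivAt_faddeev hu).deriv

theorem exp_mul_deriv_faddeev {x : ℝ} (hu : DifferentiableAt ℝ u x) :
    Complex.exp (Complex.I * k * x) * deriv (faddeev k u) x = deriv u x - Complex.I * k * u x := by
  rw [deriv_faddeev hu, ← mul_assoc, ← Complex.exp_add, add_neg_cancel, Complex.exp_zero, one_mul]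

namespace IsHelmholtzSolution

theorem differentiable (hu : IsHelmholtzSolution q k u) : Differentiable ℝ u :=
  hu.contDiff.differentiable one_ne_zero

theorem continuous_deriv_faddeev (hu : IsHelmholtzSolution q k u) :
    Continuous (deriv (faddeev k u)) := by
  have hu' := hu.isIndefiniteIntegral_deriv.continuous
  have hu₀ := hu.contDiff.continuous
  have hcont : Continuous fun x : ℝ ↦
      Complex.exp (-(Complex.I * k * x)) * (deriv u x - Complex.I * k * u x) := by fun_prop
  exact hcont.congr fun x ↦ (deriv_faddeev (hu.differentiable x)).symm

theorem isIndefiniteIntegral_faddeev (hu : IsHelmholtzSolution q k u) :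
    IsIndefiniteIntegral (faddeev k u) (deriv (faddeev k u)) :=
  .of_hasDerivAt (fun x ↦ (hasDerivAt_faddeev (hu.differentiable x)).differentiableAt.hasDerivAt)
    hu.continuous_deriv_faddeev

theorem isIndefiniteIntegral_mul_deriv_faddeev (hu : IsHelmholtzSolution q k u) {w w' : ℝ → ℂ}
    (hw : ∀ x, HasDerivAt w (w' x) x) (hw' : Continuous w') :
    IsIndefiniteIntegral (fun x ↦ w x * deriv (faddeev k u) x) fun x ↦
      (w' x - Complex.I * (2 * k) * w x) * deriv (faddeev k u) x +
        k ^ 2 * w x * (q x * faddeev k u x) := by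
  have hwc : Continuous w := continuous_iff_continuousAt.2 fun x ↦ (hw x).continuousAt
  have hE : IsIndefiniteIntegral (fun x : ℝ ↦ w x * Complex.exp (-(Complex.I * k) * x))
      fun x : ℝ ↦ w' x * Complex.exp (-(Complex.I * k) * x) +
        w x * (-(Complex.I * k) * Complex.exp (-(Complex.I * k) * x)) :=
    .of_hasDerivAt (fun x ↦ (hw x).mul (hasDerivAt_exp_mul_ofReal _ x)) (by fun_prop)
  have hv : IsIndefiniteIntegral (fun x ↦ deriv u x - Complex.I * k * u x)
      fun x ↦ -(k ^ 2 * (1 - q x)) * u x - Complex.I * k * deriv u x :=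
    hu.isIndefiniteIntegral_deriv.sub <|
      .of_hasDerivAt (fun x ↦ (hu.differentiable x).hasDerivAt.const_mul _)
        (hu.isIndefiniteIntegral_deriv.continuous.const_mul _)
  refine (hE.mul hv).congr (fun x ↦ ?_) fun x ↦ ?_
  · rw [deriv_faddeev (hu.differentiable x), neg_mul]
    ring
  · rw [deriv_faddeev (hu.differentiable x), faddeev, neg_mul]
    linear_combination -(w x * k ^ 2 * Complex.exp (-(Complex.I * k * x)) * u x) * Complex.I_sq

theorem isIndefiniteIntegral_exp_mul_deriv_faddeev (hu : IsHelmholtzSolution q k u) (x : ℝ) :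
    IsIndefiniteIntegral
      (fun y ↦ Complex.exp (Complex.I * (2 * k) * ↑(y - x)) * deriv (faddeev k u) y)
      fun y ↦ k ^ 2 * Complex.exp (Complex.I * (2 * k) * ↑(y - x)) * (q y * faddeev k u y) := by
  refine (hu.isIndefiniteIntegral_mul_deriv_faddeev
    (fun y ↦ (hasDerivAt_exp_mul_ofReal (Complex.I * (2 * k)) (y - x)).comp_sub_const y x)
    (by fun_prop)).congr (fun _ ↦ rfl) fun y ↦ ?_
  rw [sub_self, zero_mul, zero_add]

theorem isIndefiniteIntegral_jostKernel_mul_deriv_faddeev_sub (hu : IsHelmholtzSolution q k u)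
    (x : ℝ) :
    IsIndefiniteIntegral (fun y ↦ jostKernel k (y - x) * deriv (faddeev k u) y - faddeev k u y)
      fun y ↦ k ^ 2 * jostKernel k (y - x) * (q y * faddeev k u y) := by
  refine ((hu.isIndefiniteIntegral_mul_deriv_faddeev
    (fun y ↦ (hasDerivAt_jostKernel (y - x)).comp_sub_const y x) (by fun_prop)).sub
    hu.isIndefiniteIntegral_faddeev).congr (fun _ ↦ rfl) fun y ↦ ?_
  rw [mul_jostKernel]
  ring

end IsHelmholtzSolution

namespace IsJostSolution

theorem integrableOn_norm_mul_norm_faddeev (hu : IsJostSolution q k u)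
    (hq : ∀ a, IntegrableOn q (Ioi a)) (a : ℝ) :
    IntegrableOn (fun y ↦ ‖q y‖ * ‖faddeev k u y‖) (Ioi a) :=
  integrableOn_Ioi_norm_mul_of_tendsto hq hu.isIndefiniteIntegral_faddeev.continuous
    hu.tendsto_faddeev a

theorem norm_exp_mul_deriv_faddeev_sub_le (hu : IsJostSolution q k u)
    (hq : ∀ a, IntegrableOn q (Ioi a)) (hk : 0 ≤ k.im) {x y : ℝ} (hxy : x ≤ y) :
    ‖Complex.exp (Complex.I * (2 * k) * ↑(y - x)) * deriv (faddeev k u) y -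
      deriv (faddeev k u) x‖ ≤ ‖k‖ ^ 2 * forcingTail q k u x := by
  have h := (hu.isIndefiniteIntegral_exp_mul_deriv_faddeev x).norm_sub_le hxy
    ((hu.integrableOn_norm_mul_norm_faddeev hq x).const_mul (‖k‖ ^ 2)) fun t ht ↦ by
      rw [norm_mul, norm_mul, norm_mul, norm_pow]
      exact mul_le_mul_of_nonneg_right (mul_le_of_le_one_right (by positivity)
        (norm_exp_I_two_mul_le_one hk (sub_nonneg.2 ht.le))) (by positivity)
  simpa [integral_const_mul, forcingTail] using h

theorem norm_jostKernel_mul_deriv_faddeev_sub_le (hu : IsJostSolution q k u)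
    (hq : ∀ a, IntegrableOn q (Ioi a)) (hk : 0 ≤ k.im) {x y : ℝ} (hxy : x ≤ y) :
    ‖jostKernel k (y - x) * deriv (faddeev k u) y - (faddeev k u y - faddeev k u x)‖ ≤
      ‖k‖ * forcingTail q k u x := by
  have h := (hu.isIndefiniteIntegral_jostKernel_mul_deriv_faddeev_sub x).norm_sub_le hxy
    ((hu.integrableOn_norm_mul_norm_faddeev hq x).const_mul ‖k‖) fun t ht ↦ by
      rw [norm_mul, norm_mul, norm_mul, norm_pow, pow_two, mul_assoc ‖k‖]
      exact mul_le_mul_of_nonneg_right (mul_le_of_le_one_right (norm_nonneg k)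
        (norm_mul_norm_jostKernel_le_one hk (sub_nonneg.2 ht.le))) (by positivity)
  rw [sub_self, jostKernel_zero, zero_mul, zero_sub, sub_neg_eq_add, integral_const_mul] at h
  rwa [← sub_add]

theorem tendsto_deriv_faddeev (hu : IsJostSolution q k u) (hq : ∀ a, IntegrableOn q (Ioi a))
    (hk : 0 ≤ k.im) : Tendsto (deriv (faddeev k u)) atTop (𝓝 0) := by
  obtain ⟨h, hpos, hne⟩ := exists_pos_jostKernel_ne_zero k
  have hshift : Tendsto (fun x ↦ x - h) atTop atTop := tendsto_atTop_add_const_right _ _ tendsto_id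
  have hm : Tendsto (fun x ↦ faddeev k u x - faddeev k u (x - h)) atTop (𝓝 0) := by
    simpa using hu.tendsto_faddeev.sub (hu.tendsto_faddeev.comp hshift)
  have hG : Tendsto (fun x ↦ ‖k‖ * forcingTail q k u (x - h)) atTop (𝓝 0) := by
    simpa using ((tendsto_forcingTail q k u).comp hshift).const_mul ‖k‖
  have hdiff : Tendsto (fun x ↦ jostKernel k h * deriv (faddeev k u) x -
      (faddeev k u x - faddeev k u (x - h))) atTop (𝓝 0) :=
    squeeze_zero_norm (fun x ↦ by
      simpa using hu.norm_jostKernel_mul_deriv_faddeev_sub_le hq hk (sub_le_self x hpos.le)) hG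
  simpa [hne] using (hdiff.add hm).const_mul (jostKernel k h)⁻¹

theorem norm_deriv_faddeev_le (hu : IsJostSolution q k u) (hq : ∀ a, IntegrableOn q (Ioi a))
    (hk : 0 ≤ k.im) (x : ℝ) : ‖deriv (faddeev k u) x‖ ≤ ‖k‖ ^ 2 * forcingTail q k u x := by
  have hlim : Tendsto (fun y : ℝ ↦ Complex.exp (Complex.I * (2 * k) * ↑(y - x)) *
      deriv (faddeev k u) y) atTop (𝓝 0) := by
    refine squeeze_zero_norm' ?_ (by simpa using (hu.tendsto_deriv_faddeev hq hk).norm)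
    filter_upwards [eventually_ge_atTop x] with y hxy
    rw [norm_mul]
    exact mul_le_of_le_one_left (norm_nonneg _) (norm_exp_I_two_mul_le_one hk (sub_nonneg.2 hxy))
  have hle : ‖0 - deriv (faddeev k u) x‖ ≤ ‖k‖ ^ 2 * forcingTail q k u x :=
    le_of_tendsto (hlim.sub_const _).norm <| (eventually_ge_atTop x).mono fun y hxy ↦
      hu.norm_exp_mul_deriv_faddeev_sub_le hq hk hxy
  rwa [zero_sub, norm_neg] at hle

theorem norm_faddeev_sub_one_le (hu : IsJostSolution q k u) (hq : ∀ a, IntegrableOn q (Ioi a))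
    (hk : 0 ≤ k.im) (x : ℝ) : ‖faddeev k u x - 1‖ ≤ ‖k‖ * forcingTail q k u x := by
  have hG : Tendsto (fun y ↦ ‖k‖ * forcingTail q k u y) atTop (𝓝 0) := by
    simpa using (tendsto_forcingTail q k u).const_mul ‖k‖
  have hlim : Tendsto (fun y ↦ jostKernel k (y - x) * deriv (faddeev k u) y) atTop (𝓝 0) := by
    refine squeeze_zero_norm' ?_ hG
    filter_upwards [eventually_ge_atTop x] with y hxy
    calc ‖jostKernel k (y - x) * deriv (faddeev k u) y‖
        ≤ ‖jostKernel k (y - x)‖ * (‖k‖ ^ 2 * forcingTail q k u y) := by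
          rw [norm_mul]
          gcongr
          exact hu.norm_deriv_faddeev_le hq hk y
      _ = ‖k‖ * ‖jostKernel k (y - x)‖ * (‖k‖ * forcingTail q k u y) := by ring
      _ ≤ ‖k‖ * forcingTail q k u y :=
          mul_le_of_le_one_left
            (mul_nonneg (norm_nonneg k) (integral_nonneg fun _ ↦ by positivity))
            (norm_mul_norm_jostKernel_le_one hk (sub_nonneg.2 hxy))
  have hle : ‖0 - (1 - faddeev k u x)‖ ≤ ‖k‖ * forcingTail q k u x :=
    le_of_tendsto (hlim.sub (hu.tendsto_faddeev.sub_const _)).norm <|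
      (eventually_ge_atTop x).mono fun y hxy ↦
        hu.norm_jostKernel_mul_deriv_faddeev_sub_le hq hk hxy
  rwa [zero_sub, neg_sub] at hle

theorem one_add_norm_mul_forcingTail_le_exp (hu : IsJostSolution q k u)
    (hq : ∀ a, IntegrableOn q (Ioi a)) (hk : 0 ≤ k.im) (x : ℝ) :
    1 + ‖k‖ * forcingTail q k u x ≤ Real.exp (‖k‖ * ∫ y in Ioi x, ‖q y‖) := by
  have htail (y : ℝ) : ∫ t in Ioi y, ‖k‖ * ‖q t‖ * ‖faddeev k u t‖ = ‖k‖ * forcingTail q k u y := by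
    simp only [mul_assoc, integral_const_mul, forcingTail]
  have hm (y : ℝ) :
      ‖faddeev k u y‖ ≤ 1 + ∫ t in Ioi y, ‖k‖ * ‖q t‖ * ‖faddeev k u t‖ := by
    rw [htail]
    have := norm_le_norm_add_norm_sub' (faddeev k u y) 1
    rw [norm_one] at this
    linarith [hu.norm_faddeev_sub_one_le hq hk y]
  have hgronwall := add_integral_Ioi_le_mul_exp (p := fun y ↦ ‖k‖ * ‖q y‖)
    (fun y ↦ by positivity) (fun a ↦ (hq a).norm.const_mul ‖k‖)
    (fun a ↦ by
      simpa only [IntegrableOn, mul_assoc] using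
        (hu.integrableOn_norm_mul_norm_faddeev hq a).const_mul ‖k‖) hm x
  rwa [htail, integral_const_mul, one_mul] at hgronwall

end IsJostSolution

end Faddeev

/-! ### Bounds for the Jost solution -/

section JostBounds

open Set

variable {q u : ℝ → ℂ} {k : ℂ}

theorem exp_sub_one_le_mul_exp (s : ℝ) : Real.exp s - 1 ≤ s * Real.exp s := by
  have h := mul_le_mul_of_nonneg_right (Real.one_sub_le_exp_neg s) (Real.exp_pos s).le
  rw [← Real.exp_add, neg_add_cancel, Real.exp_zero, sub_mul, one_mul] at h
  linarith

namespace IsJostSolution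

theorem norm_sub_exp_le (hu : IsJostSolution q k u) (hq : ∀ a, IntegrableOn q (Ioi a))
    (hk : 0 ≤ k.im) (x : ℝ) :
    ‖u x - Complex.exp (Complex.I * k * x)‖ ≤
      Real.exp (-(x * k.im)) * (Real.exp (‖k‖ * ∫ y in Ioi x, ‖q y‖) - 1) := by
  rw [← exp_mul_faddeev k u x, ← mul_sub_one, norm_mul, norm_exp_I_mul]
  gcongr
  linarith [hu.norm_faddeev_sub_one_le hq hk x, hu.one_add_norm_mul_forcingTail_le_exp hq hk x]

theorem norm_deriv_sub_le (hu : IsJostSolution q k u) (hq : ∀ a, IntegrableOn q (Ioi a))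
    (hk : 0 ≤ k.im) (x : ℝ) :
    ‖deriv u x - Complex.I * k * u x‖ ≤
      Real.exp (-(x * k.im)) * (‖k‖ * (Real.exp (‖k‖ * ∫ y in Ioi x, ‖q y‖) - 1)) := by
  rw [← exp_mul_deriv_faddeev (hu.differentiable x), norm_mul, norm_exp_I_mul]
  gcongr
  calc ‖deriv (faddeev k u) x‖ ≤ ‖k‖ ^ 2 * forcingTail q k u x := hu.norm_deriv_faddeev_le hq hk x
    _ = ‖k‖ * (‖k‖ * forcingTail q k u x) := by ring
    _ ≤ ‖k‖ * (Real.exp (‖k‖ * ∫ y in Ioi x, ‖q y‖) - 1) := by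
        gcongr
        linarith [hu.one_add_norm_mul_forcingTail_le_exp hq hk x]

end IsJostSolution

theorem jost_plus_estimates_general (hq : Integrable q) (hk : 0 ≤ k.im)
    (hu : IsJostSolution q k u) (x : ℝ) :
    ‖u x - Complex.exp (Complex.I * k * x)‖ ≤
        ‖k‖ * (∫ y in Ioi x, ‖q y‖) * Real.exp (‖k‖ * (∫ y in Ioi x, ‖q y‖) - x * k.im) ∧
      ‖deriv u x - Complex.I * k * u x‖ ≤
        ‖k‖ ^ 2 * (∫ y in Ioi x, ‖q y‖) *
          (1 + ‖k‖ * (∫ y, ‖q y‖) * Real.exp (‖k‖ * ∫ y, ‖q y‖)) * Real.exp (-(x * k.im)) := by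
  have hqi (a : ℝ) : IntegrableOn q (Ioi a) := hq.integrableOn
  set γ := ∫ y in Ioi x, ‖q y‖
  set Q := ∫ y, ‖q y‖
  have : 0 ≤ γ := integral_nonneg fun _ ↦ norm_nonneg _
  have hγQ : γ ≤ Q := setIntegral_le_integral hq.norm (.of_forall fun _ ↦ norm_nonneg _)
  have hγ : Real.exp (‖k‖ * γ) - 1 ≤ ‖k‖ * γ * Real.exp (‖k‖ * γ) := exp_sub_one_le_mul_exp _
  have hQ : Real.exp (‖k‖ * γ) ≤ 1 + ‖k‖ * Q * Real.exp (‖k‖ * Q) :=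
    calc Real.exp (‖k‖ * γ) ≤ Real.exp (‖k‖ * Q) := by gcongr
      _ ≤ 1 + ‖k‖ * Q * Real.exp (‖k‖ * Q) := by linarith [exp_sub_one_le_mul_exp (‖k‖ * Q)]
  constructor
  · calc ‖u x - Complex.exp (Complex.I * k * x)‖
        ≤ Real.exp (-(x * k.im)) * (Real.exp (‖k‖ * γ) - 1) := hu.norm_sub_exp_le hqi hk x
      _ ≤ Real.exp (-(x * k.im)) * (‖k‖ * γ * Real.exp (‖k‖ * γ)) := by gcongr
      _ = ‖k‖ * γ * Real.exp (‖k‖ * γ - x * k.im) := by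
          rw [sub_eq_add_neg, Real.exp_add]
          ring
  · calc ‖deriv u x - Complex.I * k * u x‖
        ≤ Real.exp (-(x * k.im)) * (‖k‖ * (Real.exp (‖k‖ * γ) - 1)) :=
          hu.norm_deriv_sub_le hqi hk x
      _ ≤ Real.exp (-(x * k.im)) *
          (‖k‖ * (‖k‖ * γ * (1 + ‖k‖ * Q * Real.exp (‖k‖ * Q)))) := by
          gcongr
          exact hγ.trans (by gcongr)
      _ = ‖k‖ ^ 2 * γ * (1 + ‖k‖ * Q * Real.exp (‖k‖ * Q)) * Real.exp (-(x * k.im)) := by ring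

end JostBounds

/-! ### The sound speed -/

section SoundSpeed

variable {c : ℝ → ℝ} {k : ℂ} {u : ℝ → ℂ}

theorem abs_qfun_le {c₀ cM : ℝ} (hc₀ : 0 < c₀) {x : ℝ} (h₀ : c₀ ≤ c x) (hM : c x ≤ cM) :
    |qfun c x| ≤ (cM + 1) / c₀ ^ 2 * |c x - 1| := by
  have hcx : 0 < c x := hc₀.trans_le h₀
  have hfactor : qfun c x = (c x + 1) / c x ^ 2 * (c x - 1) := by
    unfold qfun
    field_simp
    ring
  have hnum : 0 ≤ cM + 1 := by linarith
  rw [hfactor, abs_mul, abs_of_pos (by positivity : 0 < (c x + 1) / c x ^ 2)]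
  gcongr

theorem integrable_qfun (hmeas : Measurable c) (h1 : HypH1 c) (h2 : HypH2 c) :
    Integrable (qfun c) := by
  obtain ⟨c₀, hc₀, cM, hcM, h1⟩ := h1
  obtain ⟨C, -, δ, hδ, h2⟩ := h2
  have hdecay : Integrable fun x : ℝ ↦ (1 + ‖x‖ ^ 2) ^ (-(1 + δ) / 2) :=
    integrable_rpow_neg_one_add_norm_sq (by simpa using hδ)
  simp only [Real.norm_eq_abs, sq_abs] at hdecay
  have hmeas_q : Measurable (qfun c) := by
    unfold qfun
    fun_prop
  refine ((hdecay.const_mul C).const_mul ((cM + 1) / c₀ ^ 2)).mono' hmeas_q.aestronglyMeasurable ?_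
  filter_upwards [h1, h2] with x ⟨h₀, hM⟩ hx
  exact (abs_qfun_le hc₀ h₀.le hM).trans (by gcongr)

theorem IsJostPlus.isJostSolution (hu : IsJostPlus c k u) (hq : LocallyIntegrable (qfun c)) :
    IsJostSolution (fun x ↦ (qfun c x : ℂ)) k u where
  contDiff := hu.1.1
  isIndefiniteIntegral_deriv := by
    have hq' : LocallyIntegrable fun x ↦ 1 - (qfun c x : ℂ) :=
      (locallyIntegrable_const 1).sub fun x ↦ by
        obtain ⟨s, hs, hqs⟩ := hq x
        exact ⟨s, hs, hqs.ofReal⟩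
    have hcoeff : LocallyIntegrable fun x ↦ -(k ^ 2 * (1 - (qfun c x : ℂ))) :=
      (hq'.continuous_mul continuous_const).neg
    refine ⟨hcoeff.mul_continuous hu.1.1.continuous, fun a b ↦ ?_⟩
    rw [hu.1.2 a b, add_sub_cancel_left]
    simp [qfun, div_eq_mul_inv]
  tendsto_faddeev := hu.2

end SoundSpeed

/-- The standard estimates for the Jost solution from `+∞`. -/
theorem jost_plus_estimates (c : ℝ → ℝ) (hmeas : Measurable c)
    (h1 : HypH1 c) (h2 : HypH2 c) (k : ℂ) (hk : 0 ≤ k.im)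
    (u₁ : ℝ → ℂ) (hu : IsJostPlus c k u₁) :
    ∀ x : ℝ,
      ‖u₁ x - Complex.exp (Complex.I * k * (x : ℂ))‖ ≤
        ‖k‖ * jostGamma c x * Real.exp (‖k‖ * jostGamma c x - x * k.im) ∧
      ‖deriv u₁ x - Complex.I * k * u₁ x‖ ≤
        ‖k‖ ^ 2 * jostGamma c x * (1 + ‖k‖ * qL1 c * Real.exp (‖k‖ * qL1 c)) *
          Real.exp (-(x * k.im)) := by
  intro x
  have hq := integrable_qfun hmeas h1 h2
  simpa [jostGamma, qL1] using
    jost_plus_estimates_general hq.ofReal hk (hu.isJostSolution hq.locallyIntegrable) x
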